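/- Let θ₃* be the unique root in (0,2π) of x² + 2x sin x + 6(cos x − 1) = 0 and set λ* = 6(θ₃* − sin θ₃*)/(θ₃*)³. Then inf_{λ≥0} sup_{x>0} (1/x³)·sqrt( (cos x − 1 + x²/2)² + (sin x − x + λx³/6)² ) = sup_{x>0} (cos x − 1 + x²/2)/x³, and the infimum is attained at λ = λ*. -/

import Mathlib

/-!
Put `u x = (cos x - 1 + x² / 2) / x³` and `v x = (x - sin x) / x³`. The quantity to be minimised
over `l` is the supremum over `x > 0` of the distance from the point `(u x, v x)` to `(0, l / 6)`,
so it is at least `sup u`, and the claim is that for `b = v θ` the whole curve lies in the disc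
centred at `(0, b)` which touches it at `(u θ, b)`. The derivative of the squared distance to
`(0, b)` is `-Ψ x / x⁷` with `Ψ x = 0` at `x = θ`, so it is enough that `Ψ` changes sign only
there. On `(0, 2π)` this follows by differentiating `Ψ` repeatedly: all the functions met vanish
at `0`, and by the mean value theorem a function starting at `0` inherits from its derivative the
property of changing sign at most once, from negative to positive. Beyond `2π`, positivity of `Ψ`
is an instance of the Cauchy–Schwarz inequality. All that is needed about `θ` is
`5π/4 < θ < 4π/3`, which gives `1/16 ≤ b ≤ 1/13`.
-/

open Real Set

/-- Strict single crossing: on `s`, once `f` is nonnegative it is positive from there on, so `f`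
changes sign at most once, from negative to positive. -/
def SingleCrossingOn {α β : Type*} [Preorder α] [Preorder β] [Zero β] (f : α → β) (s : Set α) :
    Prop :=
  ∀ ⦃x⦄, x ∈ s → ∀ ⦃y⦄, y ∈ s → x < y → 0 ≤ f x → 0 < f y

namespace SingleCrossingOn

lemma of_strictMonoOn {α β : Type*} [Preorder α] [Preorder β] [Zero β] {f : α → β} {s : Set α}
    (hf : StrictMonoOn f s) : SingleCrossingOn f s :=
  fun _ hx _ hy hxy h => h.trans_lt (hf hx hy hxy)

lemma pos_mul {α R : Type*} [Preorder α] [Semiring R] [LinearOrder R] [IsStrictOrderedRing R]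
    {f g : α → R} {s : Set α} (hg : ∀ x ∈ s, 0 < g x) (hf : SingleCrossingOn f s) :
    SingleCrossingOn (fun x => g x * f x) s :=
  fun x hx y hy hxy h =>
    mul_pos (hg y hy) (hf hx hy hxy (nonneg_of_mul_nonneg_right h (hg x hx)))

lemma extend_right {α β : Type*} [LinearOrder α] [Preorder β] [Zero β] {f : α → β} {a m r : α}
    (hf : SingleCrossingOn f (Ioo a m)) (hpos : ∀ x ∈ Ico m r, 0 < f x) :
    SingleCrossingOn f (Ioo a r) := by
  intro x hx y hy hxy h
  rcases lt_or_ge y m with hym | hmy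
  · exact hf ⟨hx.1, hxy.trans hym⟩ ⟨hy.1, hym⟩ hxy h
  · exact hpos y ⟨hmy, hy.2⟩

lemma of_hasDerivAt {f f' : ℝ → ℝ} {a r : ℝ} (hcont : ContinuousOn f (Ico a r))
    (hderiv : ∀ x ∈ Ioo a r, HasDerivAt f (f' x) x) (ha : f a ≤ 0)
    (hf' : SingleCrossingOn f' (Ioo a r)) : SingleCrossingOn f (Ioo a r) := by
  intro x hx y hy hxy h
  by_contra! hneg
  obtain ⟨c, hc, hfc⟩ := exists_hasDerivAt_eq_slope f f' hx.1
    (hcont.mono (Icc_subset_Ico_right hx.2)) fun z hz => hderiv z ⟨hz.1, hz.2.trans hx.2⟩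
  obtain ⟨d, hd, hfd⟩ := exists_hasDerivAt_eq_slope f f' hxy
    (hcont.mono fun z hz => ⟨hx.1.le.trans hz.1, hz.2.trans_lt hy.2⟩)
    fun z hz => hderiv z ⟨hx.1.trans hz.1, hz.2.trans hy.2⟩
  have hc0 : 0 ≤ f' c := hfc ▸ div_nonneg (by linarith) (by linarith [hx.1])
  have hd0 : f' d ≤ 0 := hfd ▸ div_nonpos_of_nonpos_of_nonneg (by linarith) (by linarith)
  exact hd0.not_gt <|
    hf' ⟨hc.1, hc.2.trans hx.2⟩ ⟨hx.1.trans hd.1, hd.2.trans hy.2⟩ (hc.2.trans hd.1) hc0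

end SingleCrossingOn

lemma sInf_sSup_eq_sSup_of_saddlePoint {α ι X : Type*} [ConditionallyCompleteLattice α]
    {A : Set ι} {B : Set X} {F : ι → X → α} {G : X → α} {i₀ : ι} {x₀ : X}
    (hi₀ : i₀ ∈ A) (hx₀ : x₀ ∈ B) (hbdd : ∀ i ∈ A, BddAbove {y | ∃ x ∈ B, y = F i x})
    (hGF : ∀ i ∈ A, ∀ x ∈ B, G x ≤ F i x) (hF : ∀ x ∈ B, F i₀ x ≤ G x₀) :
    sInf {v | ∃ i ∈ A, v = sSup {y | ∃ x ∈ B, y = F i x}} = sSup {y | ∃ x ∈ B, y = G x} ∧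
      sSup {y | ∃ x ∈ B, y = F i₀ x} = sSup {y | ∃ x ∈ B, y = G x} := by
  have hG : IsGreatest {y | ∃ x ∈ B, y = G x} (G x₀) := by
    refine ⟨⟨x₀, hx₀, rfl⟩, ?_⟩
    rintro _ ⟨x, hx, rfl⟩
    exact (hGF i₀ hi₀ x hx).trans (hF x hx)
  have hF₀ : IsGreatest {y | ∃ x ∈ B, y = F i₀ x} (G x₀) := by
    refine ⟨⟨x₀, hx₀, (hGF i₀ hi₀ x₀ hx₀).antisymm (hF x₀ hx₀)⟩, ?_⟩
    rintro _ ⟨x, hx, rfl⟩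
    exact hF x hx
  have hInf : IsLeast {v | ∃ i ∈ A, v = sSup {y | ∃ x ∈ B, y = F i x}} (G x₀) := by
    refine ⟨⟨i₀, hi₀, hF₀.csSup_eq.symm⟩, ?_⟩
    rintro _ ⟨i, hi, rfl⟩
    exact (hGF i hi x₀ hx₀).trans (le_csSup (hbdd i hi) ⟨x₀, hx₀, rfl⟩)
  rw [hInf.csInf_eq, hF₀.csSup_eq, hG.csSup_eq]
  exact ⟨rfl, rfl⟩

lemma sin_neg_of_pi_lt_of_lt_two_pi {x : ℝ} (h₁ : π < x) (h₂ : x < 2 * π) : sin x < 0 := by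
  rw [← sin_sub_two_pi]
  exact sin_neg_of_neg_of_neg_pi_lt (by linarith) (by linarith)

section Cascade

-- The derivative of each function below is the function of the preceding lemma, up to a factor
-- `x`; the last function, multiplied by `x ^ 2`, is the derivative of `distSlope b`.

variable {b : ℝ}

lemma singleCrossingOn_mul_sin_sub_cos (hb : 1 / 16 ≤ b) :
    SingleCrossingOn (fun x => 2 * b * (x * sin x) - (16 * b - 1) * cos x) (Ioo 0 π) := by
  refine SingleCrossingOn.extend_right (m := π / 2) (.of_strictMonoOn ?_) ?_
  · intro x hx y hy hxy
    have hcos : cos y ≤ cos x :=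
      (cos_lt_cos_of_nonneg_of_le_pi_div_two hx.1.le hy.2.le hxy).le
    have hsin : x * sin x < y * sin y :=
      mul_lt_mul'' hxy (sin_lt_sin_of_lt_of_le_pi_div_two (by linarith [hx.1, pi_pos]) hy.2.le hxy)
        hx.1.le (sin_nonneg_of_nonneg_of_le_pi hx.1.le (by linarith [hx.2, pi_pos]))
    nlinarith
  · intro x hx
    have hx0 : 0 < x := by linarith [hx.1, pi_pos]
    have hsin : 0 < x * sin x := mul_pos hx0 (sin_pos_of_pos_of_lt_pi hx0 hx.2)
    have hcos : cos x ≤ 0 := cos_nonpos_of_pi_div_two_le_of_le hx.1 (by linarith [hx.2, pi_pos])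
    nlinarith

lemma singleCrossingOn_sin_sub_mul_cos (hb : 1 / 16 ≤ b) :
    SingleCrossingOn (fun x => (1 - 14 * b) * sin x - 2 * b * (x * cos x)) (Ioo 0 π) := by
  refine .of_hasDerivAt (by fun_prop) (fun x _ => ?_) (by simp)
    (singleCrossingOn_mul_sin_sub_cos hb)
  refine HasDerivAt.congr_deriv (((hasDerivAt_sin x).const_mul (1 - 14 * b)).sub
    (((hasDerivAt_id' x).mul (hasDerivAt_cos x)).const_mul (2 * b))) ?_
  ring

lemma singleCrossingOn_sin_sub_mul_cos_sub_sq_mul_sin (hb₁ : 1 / 16 ≤ b) (hb₂ : b < 1 / 10) :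
    SingleCrossingOn (fun x => (1 - 10 * b) * (sin x - x * cos x) - 2 * b * (x ^ 2 * sin x))
      (Ioo 0 (π + π / 2)) := by
  refine SingleCrossingOn.extend_right (m := π) ?_ ?_
  · refine .of_hasDerivAt (by fun_prop) (fun x _ => ?_) (by simp)
      ((singleCrossingOn_sin_sub_mul_cos hb₁).pos_mul (g := fun x => x) fun x hx => hx.1)
    refine HasDerivAt.congr_deriv
      ((((hasDerivAt_sin x).sub ((hasDerivAt_id' x).mul (hasDerivAt_cos x))).const_mul
        (1 - 10 * b)).sub (((hasDerivAt_pow 2 x).mul (hasDerivAt_sin x)).const_mul (2 * b))) ?_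
    ring
  · intro x hx
    have hx3 : 3 < x := pi_gt_three.trans_le hx.1
    have hcos : cos x < 0 := cos_neg_of_pi_div_two_lt_of_lt (by linarith [hx.1, pi_pos]) hx.2
    have hsin : sin x ≤ 0 := by
      rw [← neg_nonneg, ← sin_sub_pi]
      exact sin_nonneg_of_nonneg_of_le_pi (by linarith [hx.1]) (by linarith [hx.2, pi_pos])
    have hbx : 1 - 10 * b ≤ 2 * b * x ^ 2 := by nlinarith
    calc 0 < (2 * b * x ^ 2 - (1 - 10 * b)) * -sin x + (1 - 10 * b) * (x * -cos x) :=
          add_pos_of_nonneg_of_pos (mul_nonneg (by linarith) (by linarith))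
            (mul_pos (by linarith) (mul_pos (by linarith) (by linarith)))
      _ = (1 - 10 * b) * (sin x - x * cos x) - 2 * b * (x ^ 2 * sin x) := by ring

lemma singleCrossingOn_one_sub_cos_sub_mul_sin_add_sq_mul_cos (hb₁ : 1 / 16 ≤ b)
    (hb₂ : b < 1 / 10) :
    SingleCrossingOn (fun x => (2 - 16 * b) * (1 - cos x) - (1 - 6 * b) * (x * sin x)
      + 2 * b * (x ^ 2 * cos x)) (Ioo 0 (2 * π)) := by
  refine SingleCrossingOn.extend_right (m := π + π / 2) ?_ ?_
  · refine .of_hasDerivAt (by fun_prop) (fun x _ => ?_) (by simp)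
      (singleCrossingOn_sin_sub_mul_cos_sub_sq_mul_sin hb₁ hb₂)
    refine HasDerivAt.congr_deriv (((((hasDerivAt_cos x).const_sub 1).const_mul (2 - 16 * b)).sub
      (((hasDerivAt_id' x).mul (hasDerivAt_sin x)).const_mul (1 - 6 * b))).add
      (((hasDerivAt_pow 2 x).mul (hasDerivAt_cos x)).const_mul (2 * b))) ?_
    ring
  · intro x hx
    have hx0 : 0 < x := by linarith [hx.1, pi_pos]
    have hsin : sin x < 0 := sin_neg_of_pi_lt_of_lt_two_pi (by linarith [hx.1, pi_pos]) hx.2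
    have hcos : 0 ≤ cos x := by
      rw [← cos_sub_two_pi]
      exact cos_nonneg_of_neg_pi_div_two_le_of_le (by linarith [hx.1]) (by linarith [hx.2, pi_pos])
    have h₁ : 0 ≤ (2 - 16 * b) * (1 - cos x) :=
      mul_nonneg (by linarith) (by linarith [cos_le_one x])
    have h₂ : 0 < (1 - 6 * b) * (x * -sin x) :=
      mul_pos (by linarith) (mul_pos hx0 (by linarith))
    have h₃ : 0 ≤ 2 * b * (x ^ 2 * cos x) := mul_nonneg (by linarith) (by positivity)
    linarith

lemma singleCrossingOn_mul_add_mul_cos_add_sq_mul_sin_sub_sin (hb₁ : 1 / 16 ≤ b)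
    (hb₂ : b < 1 / 10) :
    SingleCrossingOn (fun x => (2 - 16 * b) * x + (1 - 2 * b) * (x * cos x)
      + 2 * b * (x ^ 2 * sin x) - (3 - 18 * b) * sin x) (Ioo 0 (2 * π)) := by
  refine .of_hasDerivAt (by fun_prop) (fun x _ => ?_) (by simp)
    (singleCrossingOn_one_sub_cos_sub_mul_sin_add_sq_mul_cos hb₁ hb₂)
  refine HasDerivAt.congr_deriv (((((hasDerivAt_id' x).const_mul (2 - 16 * b)).add
    (((hasDerivAt_id' x).mul (hasDerivAt_cos x)).const_mul (1 - 2 * b))).add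
    (((hasDerivAt_pow 2 x).mul (hasDerivAt_sin x)).const_mul (2 * b))).sub
    ((hasDerivAt_sin x).const_mul (3 - 18 * b))) ?_
  ring

end Cascade

/-- The real part of `(exp (ix) - 1 - ix - (ix)² / 2) / x³`. -/
noncomputable def cosRatio (x : ℝ) : ℝ := (cos x - 1 + x ^ 2 / 2) / x ^ 3

/-- The imaginary part of `(exp (ix) - 1 - ix - (ix)² / 2) / x³`, with the opposite sign, so that
it is positive for `x > 0` and tends to `1 / 6` at `0`. -/
noncomputable def sinRatio (x : ℝ) : ℝ := (x - sin x) / x ^ 3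

/-- The squared distance from `(cosRatio x, sinRatio x)` to `(0, b)`. -/
noncomputable def ratioDistSq (b x : ℝ) : ℝ := cosRatio x ^ 2 + (sinRatio x - b) ^ 2

/-- The derivative of `cosRatio`, multiplied by `-2 x⁴` to make it entire; its zero in `(0, 2π)` is
the number `θ₃*` of the theorem. -/
noncomputable def cosSlope (x : ℝ) : ℝ := x ^ 2 + 2 * x * sin x + 6 * (cos x - 1)

/-- The derivative of `sinRatio`, multiplied by `-2 x⁴` to make it entire. -/
noncomputable def sinSlope (x : ℝ) : ℝ := 4 * x + 2 * x * cos x - 6 * sin x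

/-- The derivative of `ratioDistSq b`, multiplied by `-x⁷` to make it entire. -/
noncomputable def distSlope (b x : ℝ) : ℝ :=
  (cos x - 1 + x ^ 2 / 2) * cosSlope x + (x - sin x - b * x ^ 3) * sinSlope x

lemma hasDerivAt_cosRatio {x : ℝ} (hx : x ≠ 0) :
    HasDerivAt cosRatio (-cosSlope x / (2 * x ^ 4)) x := by
  refine HasDerivAt.congr_deriv
    ((((hasDerivAt_cos x).sub_const 1).add ((hasDerivAt_pow 2 x).div_const 2)).div
      (hasDerivAt_pow 3 x) (pow_ne_zero 3 hx)) ?_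
  simp only [cosSlope, Pi.add_apply]
  field_simp
  ring

lemma hasDerivAt_sinRatio {x : ℝ} (hx : x ≠ 0) :
    HasDerivAt sinRatio (-sinSlope x / (2 * x ^ 4)) x := by
  refine HasDerivAt.congr_deriv (((hasDerivAt_id' x).sub (hasDerivAt_sin x)).div
    (hasDerivAt_pow 3 x) (pow_ne_zero 3 hx)) ?_
  simp only [sinSlope, Pi.sub_apply]
  field_simp
  ring

lemma hasDerivAt_ratioDistSq (b : ℝ) {x : ℝ} (hx : x ≠ 0) :
    HasDerivAt (ratioDistSq b) (-distSlope b x / x ^ 7) x := by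
  refine HasDerivAt.congr_deriv
    (((hasDerivAt_cosRatio hx).pow 2).add (((hasDerivAt_sinRatio hx).sub_const b).pow 2)) ?_
  simp only [distSlope, cosRatio, sinRatio, Nat.reduceSub, pow_one]
  field_simp
  ring

lemma distSlope_eq (b x : ℝ) :
    distSlope b x = (1 / 2 - 4 * b) * x ^ 4 - 2 * b * (x ^ 4 * cos x)
      + (1 + 6 * b) * (x ^ 3 * sin x) + 6 * ((x ^ 2 - 2) * cos x) - 12 * (x * sin x) + 12 := by
  simp only [distSlope, cosSlope, sinSlope]
  linear_combination 6 * sin_sq_add_cos_sq x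

lemma hasDerivAt_distSlope (b x : ℝ) :
    HasDerivAt (distSlope b) (x ^ 2 * ((2 - 16 * b) * x + (1 - 2 * b) * (x * cos x)
      + 2 * b * (x ^ 2 * sin x) - (3 - 18 * b) * sin x)) x := by
  have hcos := hasDerivAt_cos x
  have hsin := hasDerivAt_sin x
  rw [funext (distSlope_eq b)]
  refine HasDerivAt.congr_deriv (((((((hasDerivAt_pow 4 x).const_mul (1 / 2 - 4 * b)).sub
    (((hasDerivAt_pow 4 x).mul hcos).const_mul (2 * b))).add
    (((hasDerivAt_pow 3 x).mul hsin).const_mul (1 + 6 * b))).add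
    ((((hasDerivAt_pow 2 x).sub_const 2).mul hcos).const_mul 6)).sub
    (((hasDerivAt_id' x).mul hsin).const_mul 12)).add_const 12) ?_
  ring

lemma singleCrossingOn_distSlope {b : ℝ} (hb₁ : 1 / 16 ≤ b) (hb₂ : b < 1 / 10) :
    SingleCrossingOn (distSlope b) (Ioo 0 (2 * π)) :=
  .of_hasDerivAt (fun x _ => (hasDerivAt_distSlope b x).continuousAt.continuousWithinAt)
    (fun x _ => hasDerivAt_distSlope b x) (by simp [distSlope])
    ((singleCrossingOn_mul_add_mul_cos_add_sq_mul_sin_sub_sin hb₁ hb₂).pos_mul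
      fun x hx => pow_pos hx.1 2)

lemma distSlope_nonneg_of_two_pi_le {b x : ℝ} (hb : b ≤ 1 / 13) (hx : 2 * π ≤ x) :
    0 ≤ distSlope b x := by
  have hx₁ : 6.28 < x := by linarith [pi_gt_d2]
  have hx₂ : 39 ≤ x ^ 2 := by nlinarith
  have hpoly : x ^ 2 * (4 * x ^ 2 - 156) ^ 2 + (38 * x ^ 2 - 312) ^ 2 ≤ (5 * x ^ 3) ^ 2 := by
    have hfactor : 0 ≤ (x ^ 2 - 39) * (9 * (x ^ 2) ^ 2 + 155 * x ^ 2 + 5421) :=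
      mul_nonneg (by linarith) (by positivity)
    nlinarith
  have hcauchy : |x * (4 * x ^ 2 - 156) * cos x - (38 * x ^ 2 - 312) * sin x| ≤ 5 * x ^ 3 := by
    refine abs_le_of_sq_le_sq (le_trans ?_ hpoly) (by positivity)
    have hdefect := sq_nonneg (x * (4 * x ^ 2 - 156) * sin x + (38 * x ^ 2 - 312) * cos x)
    linear_combination hdefect + ((x * (4 * x ^ 2 - 156)) ^ 2 + (38 * x ^ 2 - 312) ^ 2)
      * sin_sq_add_cos_sq x
  have hb_mono : distSlope (1 / 13) x ≤ distSlope b x := by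
    have hslope : 0 ≤ sinSlope x := by
      unfold sinSlope
      nlinarith [neg_one_le_cos x, sin_le_one x]
    have hdiff : 0 ≤ (1 / 13 - b) * (x ^ 3 * sinSlope x) :=
      mul_nonneg (by linarith) (by positivity)
    unfold distSlope
    linarith
  refine le_trans ?_ hb_mono
  have hle := (abs_le.mp hcauchy).2
  have hcos : 0 ≤ 12 * (1 - cos x) := by linarith [cos_le_one x]
  calc 0 ≤ x / 26 * (5 * x ^ 3 - (x * (4 * x ^ 2 - 156) * cos x - (38 * x ^ 2 - 312) * sin x))
        + 12 * (1 - cos x) := add_nonneg (mul_nonneg (by positivity) (by linarith)) hcos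
    _ = distSlope (1 / 13) x := by rw [distSlope_eq]; ring

lemma sin_five_pi_div_four : sin (5 * π / 4) = -(√2 / 2) := by
  rw [show 5 * π / 4 = π / 4 + π by ring, sin_add_pi, sin_pi_div_four]

lemma cos_five_pi_div_four : cos (5 * π / 4) = -(√2 / 2) := by
  rw [show 5 * π / 4 = π / 4 + π by ring, cos_add_pi, cos_pi_div_four]

lemma sin_four_pi_div_three : sin (4 * π / 3) = -(√3 / 2) := by
  rw [show 4 * π / 3 = π / 3 + π by ring, sin_add_pi, sin_pi_div_three]

lemma cos_four_pi_div_three : cos (4 * π / 3) = -(1 / 2) := by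
  rw [show 4 * π / 3 = π / 3 + π by ring, cos_add_pi, cos_pi_div_three]

lemma exists_cosSlope_eq_zero : ∃ x ∈ Ioo (5 * π / 4) (4 * π / 3), cosSlope x = 0 := by
  have hcont : ContinuousOn cosSlope (Icc (5 * π / 4) (4 * π / 3)) := by
    unfold cosSlope
    fun_prop
  have hleft : cosSlope (5 * π / 4) < 0 := by
    have h2 : 1.41 < √2 := lt_sqrt_of_sq_lt (by norm_num)
    rw [cosSlope, sin_five_pi_div_four, cos_five_pi_div_four]
    nlinarith [pi_gt_d2, pi_lt_d2]
  have hright : 0 < cosSlope (4 * π / 3) := by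
    have h3 : √3 < 1.74 := (sqrt_lt' (by norm_num)).mpr (by norm_num)
    rw [cosSlope, sin_four_pi_div_three, cos_four_pi_div_three]
    nlinarith [pi_gt_d2]
  exact intermediate_value_Ioo (by linarith [pi_pos]) hcont ⟨hleft, hright⟩

lemma distSlope_sinRatio_self {θ : ℝ} (hθ₀ : θ ≠ 0) (hθ : cosSlope θ = 0) :
    distSlope (sinRatio θ) θ = 0 := by
  simp [distSlope, sinRatio, hθ, hθ₀]

lemma isMaxOn_ratioDistSq {b θ : ℝ} (hθ : 0 < θ) (hneg : ∀ y ∈ Ioo 0 θ, distSlope b y ≤ 0)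
    (hpos : ∀ y ∈ Ioi θ, 0 ≤ distSlope b y) : IsMaxOn (ratioDistSq b) (Ioi 0) θ := by
  have hderiv {y : ℝ} (hy : 0 < y) := hasDerivAt_ratioDistSq b hy.ne'
  refine isMaxOn_Ioi_of_mono_anti ?_ ?_
  · refine monotoneOn_of_hasDerivWithinAt_nonneg (convex_Ioc 0 θ)
      (fun y hy => (hderiv hy.1).continuousAt.continuousWithinAt)
      (fun y hy => (hderiv (interior_subset hy).1).hasDerivWithinAt) fun y hy => ?_
    rw [interior_Ioc] at hy
    exact div_nonneg (neg_nonneg.mpr (hneg y hy)) (pow_nonneg hy.1.le 7)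
  · refine antitoneOn_of_hasDerivWithinAt_nonpos (convex_Ici θ)
      (fun y hy => (hderiv (hθ.trans_le hy)).continuousAt.continuousWithinAt)
      (fun y hy => (hderiv (hθ.trans_le (interior_subset hy))).hasDerivWithinAt) fun y hy => ?_
    rw [interior_Ici] at hy
    exact div_nonpos_of_nonpos_of_nonneg (neg_nonpos.mpr (hpos y hy))
      (pow_nonneg (hθ.trans hy).le 7)

section CriticalPoint

variable {θ : ℝ}

lemma le_sinRatio (h₁ : 5 * π / 4 ≤ θ) (h₂ : θ ≤ 4 * π / 3) : 1 / 16 ≤ sinRatio θ := by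
  have h2 : 1.41 < √2 := lt_sqrt_of_sq_lt (by norm_num)
  have hsin : sin θ ≤ -(√2 / 2) := by
    rw [← sin_pi_div_four, le_neg, ← sin_sub_pi]
    exact sin_le_sin_of_le_of_le_pi_div_two (by linarith [pi_pos]) (by linarith [pi_pos])
      (by linarith)
  have hθ : 3.92 ≤ θ := by linarith [pi_gt_d4]
  rw [sinRatio, le_div_iff₀ (by positivity)]
  have hcube : θ ^ 3 ≤ 4.189 ^ 3 := by
    gcongr
    linarith [pi_lt_d4]
  linarith [pi_gt_d4]

lemma sinRatio_le (h₁ : 5 * π / 4 ≤ θ) : sinRatio θ ≤ 1 / 13 := by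
  have h2 : √2 < 1.415 := (sqrt_lt' (by norm_num)).mpr (by norm_num)
  have hsin : -sin θ ≤ √2 / 2 + (θ - 5 * π / 4) := by
    have h := (abs_le.mp (abs_sin_sub_sin_le θ (5 * π / 4))).1
    rw [abs_of_nonneg (by linarith), sin_five_pi_div_four] at h
    linarith
  have hθ : 3.926 ≤ θ := by linarith [pi_gt_d4]
  rw [sinRatio, div_le_iff₀ (by positivity)]
  have htangent : 3 * 3.926 ^ 2 * θ - 2 * 3.926 ^ 3 ≤ θ ^ 3 := by
    nlinarith [mul_nonneg (by linarith : 0 ≤ θ + 2 * 3.926) (sq_nonneg (θ - 3.926))]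
  linarith [pi_gt_d4]

lemma ratioDistSq_le_of_cosSlope_eq_zero (h₁ : 5 * π / 4 ≤ θ) (h₂ : θ ≤ 4 * π / 3)
    (hθ : cosSlope θ = 0) {x : ℝ} (hx : 0 < x) :
    ratioDistSq (sinRatio θ) x ≤ cosRatio θ ^ 2 := by
  have hθ_mem : θ ∈ Ioo 0 (2 * π) := ⟨by linarith [pi_pos], by linarith [pi_pos]⟩
  have hb := sinRatio_le h₁
  have hzero := distSlope_sinRatio_self hθ_mem.1.ne' hθ
  have hcross := singleCrossingOn_distSlope (le_sinRatio h₁ h₂) (hb.trans_lt (by norm_num))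
  have hmax : IsMaxOn (ratioDistSq (sinRatio θ)) (Ioi 0) θ := by
    refine isMaxOn_ratioDistSq hθ_mem.1 (fun y hy => ?_) fun y hy => ?_
    · by_contra! h
      exact (hcross ⟨hy.1, hy.2.trans hθ_mem.2⟩ hθ_mem hy.2 h.le).ne' hzero
    · rcases lt_or_ge y (2 * π) with hy' | hy'
      · exact (hcross hθ_mem ⟨hθ_mem.1.trans hy, hy'⟩ hy hzero.ge).le
      · exact distSlope_nonneg_of_two_pi_le hb hy'
  calc ratioDistSq (sinRatio θ) x ≤ ratioDistSq (sinRatio θ) θ := hmax hx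
    _ = cosRatio θ ^ 2 := by simp [ratioDistSq]

end CriticalPoint

lemma cosRatio_nonneg {x : ℝ} (hx : 0 < x) : 0 ≤ cosRatio x :=
  div_nonneg (by linarith [one_sub_sq_div_two_le_cos (x := x)]) (by positivity)

lemma cosRatio_le_sqrt_ratioDistSq (b x : ℝ) : cosRatio x ≤ √(ratioDistSq b x) :=
  (le_abs_self _).trans (abs_le_sqrt (le_add_of_nonneg_right (sq_nonneg _)))

lemma ratioDistSq_le_two_mul_add (b c x : ℝ) :
    ratioDistSq c x ≤ 2 * (ratioDistSq b x + (b - c) ^ 2) := by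
  unfold ratioDistSq
  nlinarith [sq_nonneg (cosRatio x), sq_nonneg (sinRatio x - b - (b - c))]

/-- The function of `x` whose supremum is minimised over the weight `l`, namely
`|exp (ix) - 1 - ix - (ix)² / 2 - l (ix)³ / 6| / x³`. -/
noncomputable def weightedRemainderRatio (l x : ℝ) : ℝ :=
  (1 / x ^ 3) * √((cos x - 1 + x ^ 2 / 2) ^ 2 + (sin x - x + l * x ^ 3 / 6) ^ 2)

lemma weightedRemainderRatio_eq_sqrt (l : ℝ) {x : ℝ} (hx : 0 < x) :
    weightedRemainderRatio l x = √(ratioDistSq (l / 6) x) := by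
  have hscale : (cos x - 1 + x ^ 2 / 2) ^ 2 + (sin x - x + l * x ^ 3 / 6) ^ 2 =
      (x ^ 3) ^ 2 * ratioDistSq (l / 6) x := by
    simp only [ratioDistSq, cosRatio, sinRatio]
    field_simp
    ring
  rw [weightedRemainderRatio, hscale, sqrt_mul (by positivity), sqrt_sq (by positivity)]
  field_simp

lemma bddAbove_weightedRemainderRatio (l : ℝ) :
    BddAbove {y | ∃ x ∈ Ioi (0 : ℝ), y = weightedRemainderRatio l x} := by
  obtain ⟨θ, hθ_mem, hθ⟩ := exists_cosSlope_eq_zero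
  refine ⟨√(2 * (cosRatio θ ^ 2 + (sinRatio θ - l / 6) ^ 2)), ?_⟩
  rintro _ ⟨x, hx, rfl⟩
  rw [weightedRemainderRatio_eq_sqrt l hx]
  refine sqrt_le_sqrt ((ratioDistSq_le_two_mul_add (sinRatio θ) (l / 6) x).trans ?_)
  linarith [ratioDistSq_le_of_cosSlope_eq_zero hθ_mem.1.le hθ_mem.2.le hθ hx]

theorem inf_q3_value (θ : ℝ) (hθ : θ ∈ Set.Ioo 0 (2 * Real.pi))
    (heq : θ ^ 2 + 2 * θ * Real.sin θ + 6 * (Real.cos θ - 1) = 0)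
    (huniq : ∀ x ∈ Set.Ioo 0 (2 * Real.pi),
      x ^ 2 + 2 * x * Real.sin x + 6 * (Real.cos x - 1) = 0 → x = θ)
    (lstar : ℝ) (hlstar : lstar = 6 * (θ - Real.sin θ) / θ ^ 3) :
    sInf {v : ℝ | ∃ l : ℝ, 0 ≤ l ∧
        v = sSup {y : ℝ | ∃ x : ℝ, 0 < x ∧
          y = (1 / x ^ 3) * Real.sqrt ((Real.cos x - 1 + x ^ 2 / 2) ^ 2 +
            (Real.sin x - x + l * x ^ 3 / 6) ^ 2)}} =
      sSup {y : ℝ | ∃ x : ℝ, 0 < x ∧ y = (Real.cos x - 1 + x ^ 2 / 2) / x ^ 3} ∧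
    sSup {y : ℝ | ∃ x : ℝ, 0 < x ∧
        y = (1 / x ^ 3) * Real.sqrt ((Real.cos x - 1 + x ^ 2 / 2) ^ 2 +
          (Real.sin x - x + lstar * x ^ 3 / 6) ^ 2)} =
      sSup {y : ℝ | ∃ x : ℝ, 0 < x ∧ y = (Real.cos x - 1 + x ^ 2 / 2) / x ^ 3} := by
  obtain ⟨x₀, hx₀, hx₀_zero⟩ := exists_cosSlope_eq_zero
  obtain rfl : x₀ = θ :=
    huniq x₀ ⟨by linarith [hx₀.1, pi_pos], by linarith [hx₀.2, pi_pos]⟩ hx₀_zero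
  have hcenter : lstar / 6 = sinRatio x₀ := by
    rw [hlstar, sinRatio]
    ring
  have hlstar_nonneg : 0 ≤ lstar := by
    linarith [le_sinRatio hx₀.1.le hx₀.2.le]
  refine sInf_sSup_eq_sSup_of_saddlePoint (A := Ici 0) (B := Ioi 0) (F := weightedRemainderRatio)
    (G := cosRatio) hlstar_nonneg hθ.1 (fun l _ => bddAbove_weightedRemainderRatio l)
    (fun l _ x hx => ?_) fun x hx => ?_
  · rw [weightedRemainderRatio_eq_sqrt l hx]
    exact cosRatio_le_sqrt_ratioDistSq (l / 6) x
  · rw [weightedRemainderRatio_eq_sqrt lstar hx, hcenter]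
    exact sqrt_le_iff.mpr
      ⟨cosRatio_nonneg hθ.1, ratioDistSq_le_of_cosSlope_eq_zero hx₀.1.le hx₀.2.le heq hx⟩
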